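/- Let R be a ring and let Z be a set of isomorphism classes of simple left R-modules; say a simple R-module is of type Z if its isomorphism class lies in Z, and of type Z' otherwise. Assume that Ext^1_R(S, S') = 0 and Ext^1_R(S', S) = 0 whenever S is a simple module of type Z and S' is a simple module of type Z'. Then every left R-module M of finite length admits submodules M^Z and M^{Z'} with M = M^Z ⊕ M^{Z'}, such that every composition factor of M^Z is of type Z, every composition factor of M^{Z'} is of type Z', and moreover M^Z (respectively M^{Z'}) contains every submodule of M all of whose composition factors are of type Z (respectively of type Z'). -/

import Mathlib

open CategoryTheory

universe u

/-- `AllCompositionFactorsIn R Z M` says that `M` admits a composition series all of whose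
(simple) factors satisfy the (isomorphism-invariant) predicate `Z`, i.e. every composition
factor of `M` is "of type `Z`". -/
def AllCompositionFactorsIn (R : Type u) [Ring R]
    (Z : ∀ (S : Type u) [AddCommGroup S] [Module R S], Prop)
    (M : Type u) [AddCommGroup M] [Module R M] : Prop :=
  ∃ (n : ℕ) (f : Fin (n + 1) → Submodule R M),
    Monotone f ∧ f 0 = ⊥ ∧ f (Fin.last n) = ⊤ ∧
    ∀ i : Fin n,
      IsSimpleModule R
        ((f i.succ) ⧸ (Submodule.comap (f i.succ).subtype (f i.castSucc))) ∧
      Z ((f i.succ) ⧸ (Submodule.comap (f i.succ).subtype (f i.castSucc)))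

/-- The first Ext group of two `R`-modules, computed in the abelian category of
`R`-modules (as a `ℤ`-linear category). -/
noncomputable def ext1Group (R : Type u) [Ring R] (S : Type u) [AddCommGroup S] [Module R S]
    (T : Type u) [AddCommGroup T] [Module R T] : Type u :=
  ((Ext ℤ (ModuleCat.{u} R) 1).obj (Opposite.op (ModuleCat.of R S))).obj (ModuleCat.of R T)

set_option linter.unusedSectionVars false

section LatticePart
variable {α : Type*} [Lattice α] [IsModularLattice α] [BoundedOrder α]

/-- All covers below `N` satisfy `z`. -/
def CovAll (z : α → α → Prop) (N : α) : Prop := ∀ A B, A ⋖ B → B ≤ N → z A B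

/-- `z` is invariant under perspectivity. -/
def Persp (z : α → α → Prop) : Prop := ∀ a b, z (a ⊓ b) a ↔ z b (a ⊔ b)

theorem Persp.not {z : α → α → Prop} (h : Persp z) : Persp (fun a b => ¬ z a b) :=
  fun a b => not_congr (h a b)

theorem inf_cov {a b c : α} (hab : a ⋖ b) (h : c ⊔ a = b) : c ⊓ a ⋖ c := by
  subst h
  rw [inf_comm]
  rw [sup_comm] at hab
  exact IsLowerModularLattice.inf_covBy_of_covBy_sup hab

theorem CovAll.ext {z : α → α → Prop} (hz : Persp z) {N P : α} (hN : CovAll z N)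
    (h : ∀ A B, A ⋖ B → N ≤ A → B ≤ P ⊔ N → z A B) : CovAll z P := by
  intro A B hAB hBP
  by_cases hc : B ⊓ N ≤ A
  · have h1 : B ⊓ (A ⊔ N) = A := by
      rw [inf_comm, sup_inf_assoc_of_le N hAB.le, inf_comm N, sup_eq_left.2 hc]
    have h2 : B ⊔ (A ⊔ N) = B ⊔ N := by
      rw [← sup_assoc, sup_eq_left.2 hAB.le]
    have := hz B (A ⊔ N)
    rw [h1, h2] at this
    rw [this]
    refine h _ _ ?_ le_sup_right (sup_le_sup_right hBP _)
    rw [← h2]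
    apply IsUpperModularLattice.covBy_sup_of_inf_covBy
    rwa [h1]
  · have h2 : (B ⊓ N) ⊔ A = B := by
      rcases hAB.eq_or_eq (le_sup_right : A ≤ (B ⊓ N) ⊔ A) (sup_le inf_le_left hAB.le) with h | h
      · exact absurd (sup_eq_right.1 h) hc
      · exact h
    have := hz (B ⊓ N) A
    rw [h2] at this
    rw [← this]
    exact hN _ _ (inf_cov hAB h2) inf_le_right

/-- A cover in the interval from N to the join is perspective to one below the other module. -/
theorem CovAll.of_sup {z : α → α → Prop} (hz : Persp z) {N N' : α} (hN' : CovAll z N')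
    {A B : α} (hAB : A ⋖ B) (hNA : N ≤ A) (hB : B ≤ N ⊔ N') : z A B := by
  have h2 : (N' ⊓ B) ⊔ A = B := by
    apply le_antisymm (sup_le inf_le_right hAB.le)
    calc B = (N ⊔ N') ⊓ B := (inf_eq_right.2 hB).symm
      _ = N ⊔ N' ⊓ B := sup_inf_assoc_of_le N' (hNA.trans hAB.le)
      _ ≤ _ := sup_le (hNA.trans le_sup_right) le_sup_left
  have := hz (N' ⊓ B) A
  rw [h2] at this
  rw [← this]
  exact hN' _ _ (inf_cov hAB h2) inf_le_left

theorem CovAll.sup {z : α → α → Prop} (hz : Persp z) {N N' : α} (hN : CovAll z N)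
    (hN' : CovAll z N') : CovAll z (N ⊔ N') :=
  hN.ext hz fun _ _ hAB h1 h2 => hN'.of_sup hz hAB h1 (by simpa [sup_comm, sup_assoc] using h2)

theorem CovAll.bot (z : α → α → Prop) : CovAll z (⊥ : α) := fun _ _ hAB hB =>
  absurd (hAB.lt.trans_le hB) not_lt_bot

theorem CovAll.chain {z : α → α → Prop} (hz : Persp z) {n : ℕ} (f : Fin (n + 1) → α)
    (h0 : f 0 = ⊥) (h : ∀ i : Fin n, f i.castSucc ⋖ f i.succ ∧ z (f i.castSucc) (f i.succ)) :
    ∀ i, CovAll z (f i) := by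
  intro i
  induction i using Fin.induction with
  | zero => rw [h0]; exact CovAll.bot z
  | succ i ih =>
    refine ih.ext hz fun A B hAB h1 h2 => ?_
    rw [sup_eq_left.2 (h i).1.le] at h2
    have hA : A = f i.castSucc := by
      rcases (h i).1.eq_or_eq h1 (hAB.le.trans h2) with h | h
      · exact h
      · exact absurd (hAB.lt.trans_le h2) (h ▸ lt_irrefl _)
    subst hA
    rcases (h i).1.eq_or_eq hAB.le h2 with h' | h'
    · exact absurd hAB.lt (h' ▸ lt_irrefl _)
    · rw [h']; exact (h i).2

theorem CovAll.exists_max [WellFoundedGT α] {z : α → α → Prop} (hz : Persp z) :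
    ∃ N, CovAll z N ∧ ∀ N', CovAll z N' → N' ≤ N := by
  obtain ⟨N, hN, hmax⟩ := WellFounded.has_min (wellFounded_gt (α := α)) {N | CovAll z N}
    ⟨⊥, CovAll.bot z⟩
  refine ⟨N, hN, fun N' h' => ?_⟩
  have := hmax (N ⊔ N') (CovAll.sup hz hN h')
  by_contra hc
  exact this (left_lt_sup.2 hc)

theorem no_cov [WellFoundedGT α] [WellFoundedLT α] {z : α → α → Prop}
    (hz : Persp z) {N N' W E : α} (hN : CovAll z N) (hmax : ∀ P, CovAll z P → P ≤ N)
    (hN' : CovAll (fun a b => ¬ z a b) N') (hW : W = N ⊔ N') (hWE : W ⋖ E) (hzE : z W E)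
    (split : ∀ K L C, K ⋖ L → L ⋖ C → ¬ z K L → z L C → ∃ C', K ≤ C' ∧ C' ⊓ L = K ∧ C' ⊔ L = C) :
    False := by
  obtain ⟨C, ⟨hNC, hCW⟩, hmin⟩ := WellFounded.has_min (wellFounded_lt (α := α))
    {C | N ≤ C ∧ C ⊔ W = E} ⟨E, by rw [hW] at hWE; exact le_sup_left.trans hWE.le,
      sup_eq_left.2 hWE.le⟩
  have hNW : N ≤ W := hW ▸ le_sup_left
  have hcov : C ⊓ W ⋖ C := inf_cov hWE hCW
  have hzC : z (C ⊓ W) C := by rw [hz, hCW]; exact hzE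
  rcases (le_inf hNC hNW).eq_or_lt with h | h
  · have : CovAll z C := by
      refine hN.ext hz fun A B hAB h1 h2 => ?_
      rw [sup_eq_left.2 hNC] at h2
      have hA : A = N := by
        rw [← h] at hcov
        rcases hcov.eq_or_eq h1 (hAB.le.trans h2) with h | h
        · exact h
        · exact absurd (hAB.lt.trans_le h2) (h ▸ lt_irrefl _)
      subst hA
      rw [← h] at hcov hzC
      rcases hcov.eq_or_eq hAB.le h2 with h' | h'
      · exact absurd hAB.lt (h' ▸ lt_irrefl _)
      · rw [h']; exact hzC
    have h3 : C ≤ W := (hmax C this).trans hNW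
    rw [sup_eq_right.2 h3] at hCW
    exact hWE.lt.ne hCW
  · obtain ⟨K, ⟨hNK, hKL⟩, hKmax⟩ := WellFounded.has_min (wellFounded_gt (α := α))
      {K | N ≤ K ∧ K < C ⊓ W} ⟨N, le_rfl, h⟩
    have hKcov : K ⋖ C ⊓ W := ⟨hKL, fun X h1 h2 => hKmax X ⟨hNK.trans h1.le, h2⟩ h1⟩
    have hnz : ¬ z K (C ⊓ W) := hN'.of_sup hz.not hKcov hNK (hW ▸ inf_le_right)
    obtain ⟨C', hK, h1, h2⟩ := split K _ C hKcov hcov hnz hzC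
    refine hmin C' ⟨hNK.trans hK, ?_⟩ (lt_of_le_of_ne (h2 ▸ le_sup_left) ?_)
    · rw [← hCW, ← h2, sup_assoc, sup_eq_right.2 (inf_le_right : C ⊓ W ≤ W)]
    · rintro rfl
      rw [inf_eq_right.2 inf_le_left] at h1
      exact hKL.ne h1.symm

theorem lattice_main [WellFoundedGT α] [WellFoundedLT α] {z : α → α → Prop}
    (hz : Persp z)
    (split : ∀ K L C, K ⋖ L → L ⋖ C → ¬ (z K L ↔ z L C) →
      ∃ C', K ≤ C' ∧ C' ⊓ L = K ∧ C' ⊔ L = C) :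
    ∃ N N' : α, IsCompl N N' ∧ CovAll z N ∧ CovAll (fun a b => ¬ z a b) N' ∧
      (∀ P, CovAll z P → P ≤ N) ∧ (∀ P, CovAll (fun a b => ¬ z a b) P → P ≤ N') := by
  obtain ⟨N, hN, hmax⟩ := CovAll.exists_max hz
  obtain ⟨N', hN', hmax'⟩ := CovAll.exists_max hz.not
  refine ⟨N, N', ⟨?_, ?_⟩, hN, hN', hmax, hmax'⟩
  · rw [disjoint_iff]
    by_contra hne
    obtain ⟨A, hA, hmA⟩ := WellFounded.has_min (wellFounded_gt (α := α))
      {A | A < N ⊓ N'} ⟨⊥, bot_lt_iff_ne_bot.2 hne⟩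
    have hc : A ⋖ N ⊓ N' := ⟨hA, fun X h1 h2 => hmA X h2 h1⟩
    exact hN' _ _ hc inf_le_right (hN _ _ hc inf_le_left)
  · rw [codisjoint_iff]
    by_contra hne
    obtain ⟨E, hE, hmE⟩ := WellFounded.has_min (wellFounded_lt (α := α))
      {A | N ⊔ N' < A} ⟨⊤, lt_top_iff_ne_top.2 hne⟩
    have hc : N ⊔ N' ⋖ E := ⟨hE, fun X h1 h2 => hmE X h1 h2⟩
    by_cases hzE : z (N ⊔ N') E
    · exact no_cov hz hN hmax hN' rfl hc hzE fun K L C h1 h2 h3 h4 => split K L C h1 h2 (by tauto)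
    · exact no_cov hz.not hN' hmax' (N' := N) (by simpa using hN) (sup_comm _ _) hc hzE
        fun K L C h1 h2 h3 h4 => split K L C h1 h2 (by tauto)
end LatticePart

theorem extend_of_ext (R : Type u) [Ring R] (C : Type u) [AddCommGroup C] [Module R C]
    (T : Type u) [AddCommGroup T] [Module R T] (L : Submodule R C)
    (h : Subsingleton (ext1Group R (C ⧸ L) T)) (φ : L →ₗ[R] T) :
    ∃ ρ : C →ₗ[R] T, ρ ∘ₗ L.subtype = φ := by
  let X := ModuleCat.of R (C ⧸ L)
  let P : ProjectiveResolution X := ProjectiveResolution.of X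
  have hex : (P.complex.linearYonedaObj ℤ (ModuleCat.of R T)).ExactAt 1 := by
    rw [HomologicalComplex.exactAt_iff_isZero_homology]
    refine Limits.IsZero.of_iso ?_ (P.isoExt 1 (ModuleCat.of R T)).symm
    exact @ModuleCat.isZero_of_subsingleton _ _ _ h
  rw [HomologicalComplex.exactAt_iff' _ 0 1 2 (by simp) (by simp),
    ShortComplex.moduleCat_exact_iff] at hex
  have key : ∀ u : P.complex.X 1 ⟶ ModuleCat.of R T, P.complex.d 2 1 ≫ u = 0 →
      ∃ v : P.complex.X 0 ⟶ ModuleCat.of R T, P.complex.d 1 0 ≫ v = u := by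
    intro u hu
    exact hex u hu
  have hepi : Epi (P.π.f 0) := inferInstance
  have hex0 := P.exact₀
  let π0 : P.complex.X 0 ⟶ X := P.π.f 0
  have hπ : Function.Surjective π0.hom := (ModuleCat.epi_iff_surjective _).1 hepi
  have hE : ∀ x, π0.hom x = 0 → ∃ y, (P.complex.d 1 0).hom y = x := by
    rw [ShortComplex.moduleCat_exact_iff] at hex0
    exact hex0
  have hd : ∀ y, π0.hom ((P.complex.d 1 0).hom y) = 0 := by
    intro y
    have := P.complex_d_comp_π_f_zero
    exact congrArg (fun f => f.hom y) this
  let q : ModuleCat.of R C ⟶ X := ModuleCat.ofHom L.mkQ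
  have hq : Epi q := (ModuleCat.epi_iff_surjective _).2 L.mkQ_surjective
  let g : P.complex.X 0 ⟶ ModuleCat.of R C := Projective.factorThru π0 q
  have hg : ∀ x, L.mkQ (g.hom x) = π0.hom x := fun x =>
    congrArg (fun f => f.hom x) (Projective.factorThru_comp π0 q)
  have hmem : ∀ y, g.hom ((P.complex.d 1 0).hom y) ∈ L := by
    intro y
    rw [← Submodule.ker_mkQ L, LinearMap.mem_ker, hg, hd]
  let γ : P.complex.X 1 →ₗ[R] L := (g.hom ∘ₗ (P.complex.d 1 0).hom).codRestrict L hmem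
  obtain ⟨v, hv⟩ := key (ModuleCat.ofHom (φ ∘ₗ γ)) (by
    ext y
    have h0 : (P.complex.d 1 0).hom ((P.complex.d 2 1).hom y) = 0 :=
      congrArg (fun f => f.hom y) (P.complex.d_comp_d 2 1 0)
    have : γ ((P.complex.d 2 1).hom y) = 0 := by
      apply Subtype.ext
      change g.hom ((P.complex.d 1 0).hom ((P.complex.d 2 1).hom y)) = 0
      rw [h0, map_zero]
    change φ (γ ((P.complex.d 2 1).hom y)) = 0
    rw [this, map_zero])
  have hv' : ∀ y, v.hom ((P.complex.d 1 0).hom y) = φ (γ y) := fun y =>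
    congrArg (fun f => f.hom y) hv
  let a : (P.complex.X 0 × L) →ₗ[R] C := g.hom.coprod L.subtype
  let b : (P.complex.X 0 × L) →ₗ[R] T := v.hom.coprod φ
  have ha : Function.Surjective a := by
    intro c
    obtain ⟨x, hx⟩ := hπ (L.mkQ c)
    have : c - g.hom x ∈ L := by
      rw [← Submodule.ker_mkQ L, LinearMap.mem_ker, map_sub, hg, hx, sub_self]
    exact ⟨(x, ⟨_, this⟩), by simp [a]⟩
  have hker : LinearMap.ker a ≤ LinearMap.ker b := by
    rintro ⟨x, l⟩ hxl
    have hxl' : g.hom x + (l : C) = 0 := by simpa [a] using hxl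
    have hx : π0.hom x = 0 := by
      rw [← hg, eq_neg_of_add_eq_zero_left hxl', map_neg, neg_eq_zero]
      exact (Submodule.Quotient.mk_eq_zero L).2 l.2
    obtain ⟨y, rfl⟩ := hE x hx
    have hγ : γ y = -l := Subtype.ext (eq_neg_of_add_eq_zero_left hxl')
    simp [b, hv', hγ]
  let e := a.quotKerEquivOfSurjective ha
  refine ⟨(LinearMap.ker a).liftQ b hker ∘ₗ e.symm.toLinearMap, ?_⟩
  ext l
  have : e.symm (l : C) = Submodule.Quotient.mk (0, l) := by
    rw [LinearEquiv.symm_apply_eq]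
    simp [e, a]
  simp [this, b]

section
variable {R : Type u} [Ring R] {M : Type u} [AddCommGroup M] [Module R M]

abbrev SubQ (A B : Submodule R M) : Type u := B ⧸ Submodule.comap B.subtype A

theorem split_of_ext (K L C : Submodule R M) (hKL : K ≤ L) (hLC : L ≤ C)
    (h : Subsingleton (ext1Group R (SubQ L C) (SubQ K L))) :
    ∃ C', K ≤ C' ∧ C' ⊓ L = K ∧ C' ⊔ L = C := by
  let e : Submodule.comap C.subtype L ≃ₗ[R] L := Submodule.comapSubtypeEquivOfLe hLC
  obtain ⟨ρ, hρ⟩ := extend_of_ext R C (SubQ K L) (Submodule.comap C.subtype L) h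
    ((Submodule.comap L.subtype K).mkQ ∘ₗ e.toLinearMap)
  have hρ' : ∀ x (hx : x ∈ L), ρ ⟨x, hLC hx⟩ = (Submodule.comap L.subtype K).mkQ ⟨x, hx⟩ :=
    fun x hx => LinearMap.congr_fun hρ ⟨⟨x, hLC hx⟩, hx⟩
  have hK : K ≤ (LinearMap.ker ρ).map C.subtype := by
    intro x hx
    refine ⟨⟨x, hLC (hKL hx)⟩, ?_, rfl⟩
    change ρ _ = 0
    rw [hρ' x (hKL hx)]
    simpa using hx
  refine ⟨(LinearMap.ker ρ).map C.subtype, hK, le_antisymm ?_ (le_inf hK hKL), le_antisymm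
    (sup_le (Submodule.map_subtype_le _ _) hLC) ?_⟩
  · rintro x ⟨⟨⟨y, hy⟩, hy0, rfl⟩, hxL⟩
    have h1 : ρ ⟨y, hy⟩ = 0 := hy0
    have h2 := hρ' y hxL
    rw [h1] at h2
    simpa using h2.symm
  · intro c hc
    obtain ⟨l, hl⟩ := (Submodule.comap L.subtype K).mkQ_surjective (ρ ⟨c, hc⟩)
    have : c = (c - l) + l := by simp
    rw [this]
    refine Submodule.add_mem_sup ⟨⟨c, hc⟩ - ⟨l, hLC l.2⟩, ?_, rfl⟩ l.2
    change ρ _ = 0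
    rw [map_sub, hρ' l l.2, ← hl, sub_self]

theorem mapEquiv (N : Submodule R M) (A B : Submodule R N) :
    Nonempty (SubQ A B ≃ₗ[R] SubQ (A.map N.subtype) (B.map N.subtype)) := by
  refine ⟨Submodule.Quotient.equiv _ _
    (Submodule.equivMapOfInjective N.subtype N.injective_subtype B) ?_⟩
  ext ⟨x, hx⟩
  obtain ⟨y, hy, rfl⟩ := hx
  simp only [Submodule.mem_map, Submodule.mem_comap]
  constructor
  · rintro ⟨w, hw, hw2⟩
    have h3 : N.subtype (w : N) = N.subtype y :=
      congrArg (fun t : B.map N.subtype => (t : M)) hw2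
    exact ⟨w, hw, h3⟩
  · rintro ⟨w, hw, hw2⟩
    obtain rfl := N.injective_subtype hw2
    exact ⟨⟨w, hy⟩, hw, rfl⟩

theorem covMap (N : Submodule R M) (A B : Submodule R N) (h : A ≤ B) :
    A ⋖ B ↔ A.map N.subtype ⋖ B.map N.subtype := by
  obtain ⟨e⟩ := mapEquiv N A B
  rw [covBy_iff_quot_is_simple h, covBy_iff_quot_is_simple (Submodule.map_mono h)]
  exact e.isSimpleModule_iff

theorem allComp_iff (Z : ∀ (S : Type u) [AddCommGroup S] [Module R S], Prop)
    (hZiso : ∀ (S : Type u) [AddCommGroup S] [Module R S]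
      (T : Type u) [AddCommGroup T] [Module R T], (S ≃ₗ[R] T) → (Z S ↔ Z T))
    (hp : Persp (fun A B : Submodule R M => Z (SubQ A B)))
    [IsNoetherian R M] [IsArtinian R M] (N : Submodule R M) :
    AllCompositionFactorsIn R Z N ↔ CovAll (fun A B : Submodule R M => Z (SubQ A B)) N := by
  constructor
  · rintro ⟨n, f, hmono, h0, h1, h⟩
    have := CovAll.chain hp (fun i => (f i).map N.subtype) (by simp [h0]) (fun i => by
      have hle : f i.castSucc ≤ f i.succ := hmono i.castSucc_lt_succ.le
      obtain ⟨e⟩ := mapEquiv N (f i.castSucc) (f i.succ)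
      exact ⟨(covMap N _ _ hle).1 ((covBy_iff_quot_is_simple hle).2 (h i).1),
        (hZiso _ _ e).1 (h i).2⟩) (Fin.last n)
    simpa [h1] using this
  · intro h
    obtain ⟨s, hs0, hs1⟩ := exists_compositionSeries_of_isNoetherian_isArtinian R N
    refine ⟨s.length, s.toFun, s.strictMono.monotone, hs0, hs1, fun i => ?_⟩
    have hc : s.toFun i.castSucc ⋖ s.toFun i.succ := s.step i
    obtain ⟨e⟩ := mapEquiv N (s.toFun i.castSucc) (s.toFun i.succ)
    exact ⟨(covBy_iff_quot_is_simple hc.le).1 hc, (hZiso _ _ e).2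
      (h _ _ ((covMap N _ _ hc.le).1 hc) (Submodule.map_subtype_le _ _))⟩

theorem persp_of_iso (Z : ∀ (S : Type u) [AddCommGroup S] [Module R S], Prop)
    (hZiso : ∀ (S : Type u) [AddCommGroup S] [Module R S]
      (T : Type u) [AddCommGroup T] [Module R T], (S ≃ₗ[R] T) → (Z S ↔ Z T)) :
    Persp (fun A B : Submodule R M => Z (SubQ A B)) := fun a b =>
  hZiso _ _ (LinearMap.quotientInfEquivSupQuotient a b)

end

theorem stmt1 (R : Type u) [Ring R]
    (Z : ∀ (S : Type u) [AddCommGroup S] [Module R S], Prop)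
    (hZiso : ∀ (S : Type u) [AddCommGroup S] [Module R S]
      (T : Type u) [AddCommGroup T] [Module R T], (S ≃ₗ[R] T) → (Z S ↔ Z T))
    (hext : ∀ (S : Type u) [AddCommGroup S] [Module R S]
      (S' : Type u) [AddCommGroup S'] [Module R S'],
      IsSimpleModule R S → IsSimpleModule R S' → Z S → ¬ Z S' →
      Subsingleton (ext1Group R S S') ∧ Subsingleton (ext1Group R S' S))
    (M : Type u) [AddCommGroup M] [Module R M] (hM : IsFiniteLength R M) :
    ∃ MZ MZ' : Submodule R M, IsCompl MZ MZ' ∧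
      AllCompositionFactorsIn R Z MZ ∧
      AllCompositionFactorsIn R (fun S _ _ => ¬ Z S) MZ' ∧
      (∀ N : Submodule R M, AllCompositionFactorsIn R Z N → N ≤ MZ) ∧
      (∀ N : Submodule R M,
        AllCompositionFactorsIn R (fun S _ _ => ¬ Z S) N → N ≤ MZ') := by
  obtain ⟨_, _⟩ := isFiniteLength_iff_isNoetherian_isArtinian.mp hM
  have hp := persp_of_iso (M := M) Z hZiso
  have hZiso' : ∀ (S : Type u) [AddCommGroup S] [Module R S]
      (T : Type u) [AddCommGroup T] [Module R T], (S ≃ₗ[R] T) → (¬ Z S ↔ ¬ Z T) :=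
    fun S _ _ T _ _ e => not_congr (hZiso S T e)
  obtain ⟨N, N', h1, h2, h3, h4, h5⟩ := lattice_main hp (by
    intro K L C hKL hLC hz
    have s1 := (covBy_iff_quot_is_simple hKL.le).1 hKL
    have s2 := (covBy_iff_quot_is_simple hLC.le).1 hLC
    apply split_of_ext K L C hKL.le hLC.le
    by_cases h : Z (SubQ K L)
    · exact (hext _ _ s1 s2 h (by tauto)).2
    · exact (hext _ _ s2 s1 (by tauto) h).1)
  refine ⟨N, N', h1, (allComp_iff Z hZiso hp N).2 h2,
    (allComp_iff (fun S _ _ => ¬ Z S) hZiso' hp.not N').2 h3,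
    fun P hP => h4 P ((allComp_iff Z hZiso hp P).1 hP),
    fun P hP => h5 P ((allComp_iff (fun S _ _ => ¬ Z S) hZiso' hp.not P).1 hP)⟩
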